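/- Let -∞ < a < b < ∞, 1 < p < ∞ with conjugate exponent p' = p/(p−1), let μ and w be weights on [a,b], and let ν be a nonnegative finite Borel measure on [a,b] with ν[a,b] > 0. Let Φ be a Young function that is submultiplicative and invertible on [0,∞), and assume the function Λ(t) = Φ(t^{1/p}) is convex. Define K_{p,Φ}(μ,ν,w) := (1/ν[a,b]) · ( sup_{a<x<b} [Φ^{-1}(μ[x,b]^{-1/2})]^{-2} (∫_a^x ν[a,t]^{p'} w(t)^{1−p'} dt)^{1/p'} + sup_{a<x<b} [Φ^{-1}(μ[a,x]^{-1/2})]^{-2} (∫_x^b ν[t,b]^{p'} w(t)^{1−p'} dt)^{1/p'} ). If K_{p,Φ}(μ,ν,w) < ∞, then for every Lipschitz continuous function f : [a,b] → ℝ, ‖ f − (1/ν[a,b]) ∫_a^b f dν ‖_{L_μ^Φ[a,b]} ≤ C₀(Φ) · K_{p,Φ}(μ,ν,w) · ‖f'‖_{L_w^p[a,b]}, where C₀(Φ) := 2·[Φ^{-1}(1/2)]^{-1}. -/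

import Mathlib

open MeasureTheory Set Filter
open scoped ENNReal NNReal

noncomputable section

/-- A Young function: even, convex, vanishing at `0`, nonnegative, tending to `∞`. -/
def IsYoung (Φ : ℝ → ℝ) : Prop :=
  ConvexOn ℝ Set.univ Φ ∧ (∀ t, Φ (-t) = Φ t) ∧ Φ 0 = 0 ∧ (∀ t, 0 ≤ Φ t) ∧
    Filter.Tendsto Φ Filter.atTop Filter.atTop

/-- A weight on `[a,b]`: nonnegative, measurable, positive a.e. on `[a,b]`. -/
def IsWeight (w : ℝ → ℝ) (a b : ℝ) : Prop :=
  Measurable w ∧ (∀ x, 0 ≤ w x) ∧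
    ∀ᵐ x ∂(MeasureTheory.volume.restrict (Set.Icc a b)), 0 < w x

/-- `Φ` is submultiplicative on `[0,∞)`. -/
def Submult (Φ : ℝ → ℝ) : Prop :=
  ∀ s t : ℝ, 0 ≤ s → 0 ≤ t → Φ (s * t) ≤ Φ s * Φ t

/-- `Φinv` is the inverse of `Φ` restricted to `[0,∞)`. -/
def IsYoungInv (Φ Φinv : ℝ → ℝ) : Prop :=
  (∀ t, 0 ≤ t → 0 ≤ Φinv t) ∧ (∀ t, 0 ≤ t → Φ (Φinv t) = t) ∧
    (∀ t, 0 ≤ t → Φinv (Φ t) = t)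

/-- `μ[x,y] := ∫ₓ^y μ(t) dt`, as an extended nonnegative real. -/
def wInt (μ : ℝ → ℝ) (x y : ℝ) : ℝ≥0∞ :=
  ∫⁻ t in Set.Icc x y, ENNReal.ofReal (μ t)

/-- The Luxemburg (gauge) norm of `f` on `[a,b]` w.r.t. the Young function `Φ`
and the weight `μ`: `inf {k > 0 : ∫ₐ^b Φ(f/k) μ ≤ 1}` (`∞` if no such `k`). -/
def luxNorm (Φ μ : ℝ → ℝ) (a b : ℝ) (f : ℝ → ℝ) : ℝ≥0∞ :=
  sInf {k : ℝ≥0∞ | ∃ c : ℝ, 0 < c ∧ k = ENNReal.ofReal c ∧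
    (∫⁻ x in Set.Icc a b, ENNReal.ofReal (Φ (f x / c) * μ x)) ≤ 1}

/-- `f` is Lipschitz on `[a,b]` and `f'` is a.e. its derivative on `(a,b)`. -/
def LipschitzWithDeriv (f f' : ℝ → ℝ) (a b : ℝ) : Prop :=
  (∃ K, LipschitzOnWith K f (Set.Icc a b)) ∧
    ∀ᵐ x ∂(MeasureTheory.volume.restrict (Set.Ioo a b)), HasDerivAt f (f' x) x

/-- The weighted `L^p` norm `(∫ₐ^b |g|^p w)^{1/p}`, as an extended nonnegative real. -/
def lpNorm (w : ℝ → ℝ) (p a b : ℝ) (g : ℝ → ℝ) : ℝ≥0∞ :=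
  (∫⁻ t in Set.Icc a b, ENNReal.ofReal (|g t| ^ p * w t)) ^ (1 / p)

/-- The Luxemburg (gauge) norm on a general measure space. -/
def luxNormGen {Ω : Type*} [MeasurableSpace Ω] (Φ : ℝ → ℝ) (μ : Measure Ω)
    (f : Ω → ℝ) : ℝ≥0∞ :=
  sInf {k : ℝ≥0∞ | ∃ c : ℝ, 0 < c ∧ k = ENNReal.ofReal c ∧
    (∫⁻ x, ENNReal.ofReal (Φ (f x / c)) ∂μ) ≤ 1}

/-- The Luxemburg (gauge) norm for an extended-real-valued Young function. -/
def luxNormE {Ω : Type*} [MeasurableSpace Ω] (Ψ : ℝ → ℝ≥0∞) (μ : Measure Ω)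
    (f : Ω → ℝ) : ℝ≥0∞ :=
  sInf {k : ℝ≥0∞ | ∃ c : ℝ, 0 < c ∧ k = ENNReal.ofReal c ∧
    (∫⁻ x, Ψ (f x / c) ∂μ) ≤ 1}

/-! Averaging `f x - f y = ∫ f'` over `y` with respect to `ν` bounds `|f x - mean|` by the sum of
two Hardy operators, `∫_{t ≤ x} |f' t| ν[a, t] dt` and `∫_{t ≥ x} |f' t| ν[t, b] dt`, both divided
by `ν[a, b]`. By reflection it suffices to treat the first. Put `u x = Φ⁻¹(μ[x, b] ^ (-1/2))`.

Muckenhoupt's weight in Hölder's inequality gives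
`∫_{t ≤ x} |f'| ν[a, t] dt ≤ 2 B u x (∫_{t ≤ x} |f'|^p w u^p) ^ (1/p)`.
Normalise `|f'|^p w dt` to a sub-probability measure `λ`. Jensen's inequality for
`Λ = Φ (· ^ (1/p))` and submultiplicativity of `Φ` bound `Φ` of the left side over
`2 Φ⁻¹(1/2)⁻¹ B ‖f'‖` by `1/2 · μ[x, b] ^ (-1/2) ∫_{t ≤ x} μ[t, b] ^ (-1/2) dλ`. Integrating
against `μ` and exchanging the integrals, `∫_{x ≥ t} μ[x, b] ^ (-1/2) dμ ≤ 2 μ[t, b] ^ (1/2)`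
bounds the modular by `1`. -/

section LayerCake

variable {α β : Type*} [MeasurableSpace α] [MeasurableSpace β]

lemma lintegral_ofReal_le_of_measure_lt_le {κ : Measure α} {lam : Measure β} {g : α → ℝ} {h : β → ℝ}
    (hg : Measurable g) (hh : Measurable h) (hg0 : 0 ≤ᵐ[κ] g) (hh0 : 0 ≤ᵐ[lam] h)
    (hle : ∀ s, 0 < s → κ {x | s < g x} ≤ lam {y | s < h y}) :
    ∫⁻ x, ENNReal.ofReal (g x) ∂κ ≤ ∫⁻ y, ENNReal.ofReal (h y) ∂lam := by
  rw [lintegral_eq_lintegral_meas_lt _ hg0 hg.aemeasurable,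
    lintegral_eq_lintegral_meas_lt _ hh0 hh.aemeasurable]
  exact setLIntegral_mono' measurableSet_Ioi hle

lemma lintegral_Ioo_rpow_neg {r M : ℝ} (hr : r < 1) (hM : 0 ≤ M) :
    ∫⁻ s in Ioo 0 M, ENNReal.ofReal (s ^ (-r)) = ENNReal.ofReal (M ^ (1 - r) / (1 - r)) := by
  have hint : IntervalIntegrable (fun s : ℝ => s ^ (-r)) volume 0 M :=
    intervalIntegral.intervalIntegrable_rpow' (by linarith)
  rw [Measure.restrict_congr_set Ioo_ae_eq_Ioc,
    ← ofReal_integral_eq_lintegral_ofReal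
      ((intervalIntegrable_iff_integrableOn_Ioc_of_le hM).1 hint)
      ((ae_restrict_mem measurableSet_Ioc).mono fun s hs => Real.rpow_nonneg hs.1.le _),
    ← intervalIntegral.integral_of_le hM, integral_rpow (Or.inl (by linarith))]
  have hexp : -r + 1 = 1 - r := by ring
  rw [hexp, Real.zero_rpow (by linarith), sub_zero]

lemma ae_ne_zero_of_measure_lt_le {κ : Measure α} {V : α → ℝ≥0∞}
    (h : ∀ c, κ {t | V t < c} ≤ c) : ∀ᵐ t ∂κ, V t ≠ 0 := by
  refine ae_iff.2 (le_antisymm (ENNReal.le_of_forall_pos_le_add fun ε hε _ => ?_) zero_le)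
  refine (measure_mono fun t ht => ?_).trans ((h ε).trans le_add_self)
  simpa [not_not.1 ht] using hε

lemma lt_rpow_neg_iff {r s t : ℝ} (hr : 0 < r) (hs : 0 < s) (ht : 0 < t) :
    s < t ^ (-r) ↔ t < s ^ (-r⁻¹) := by
  rw [← inv_neg, Real.lt_rpow_inv_iff_of_neg ht hs (neg_lt_zero.2 hr)]

lemma measure_lt_toReal_rpow_neg_le {κ : Measure α} {V : α → ℝ≥0∞}
    (h : ∀ c, κ {t | V t < c} ≤ c) {r s : ℝ} (hr : 0 < r) (hs : 0 < s) :
    κ {t | s < (V t).toReal ^ (-r)} ≤ ENNReal.ofReal (s ^ (-r⁻¹)) := by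
  refine (measure_mono fun t ht => ?_).trans (h _)
  have hpos : 0 < (V t).toReal := by
    refine ENNReal.toReal_nonneg.lt_of_ne fun h0 => hs.not_gt ?_
    simpa [← h0, Real.zero_rpow (neg_ne_zero.2 hr.ne')] using ht
  exact (ENNReal.lt_ofReal_iff_toReal_lt (ENNReal.toReal_pos_iff.1 hpos).2.ne).2
    ((lt_rpow_neg_iff hr hs hpos).1 ht)

/- A `κ` with `κ {V < c} ≤ c` puts no more mass where `V` is small than Lebesgue measure on
`(0, κ univ)` does where the identity is small. -/
lemma lintegral_rpow_neg_le_of_measure_lt_le {κ : Measure α} {V : α → ℝ≥0∞} (hV : Measurable V)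
    (h : ∀ c, κ {t | V t < c} ≤ c) {r : ℝ} (hr0 : 0 < r) (hr1 : r < 1) :
    ∫⁻ t, V t ^ (-r) ∂κ ≤ ENNReal.ofReal (1 - r)⁻¹ * κ univ ^ (1 - r) := by
  have hr : 0 < 1 - r := sub_pos.2 hr1
  rcases eq_or_ne (κ univ) ⊤ with htop | htop
  · simp [htop, hr, ENNReal.top_rpow_of_pos]
  set M := (κ univ).toReal with hM
  have hM0 : 0 ≤ M := ENNReal.toReal_nonneg
  calc ∫⁻ t, V t ^ (-r) ∂κ = ∫⁻ t, ENNReal.ofReal ((V t).toReal ^ (-r)) ∂κ := by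
        refine lintegral_congr_ae ?_
        filter_upwards [ae_ne_zero_of_measure_lt_le h] with t ht
        rw [ENNReal.toReal_rpow, ENNReal.ofReal_toReal]
        simp [ENNReal.rpow_neg, ht, hr0.not_gt]
    _ ≤ ∫⁻ s in Ioo 0 M, ENNReal.ofReal (s ^ (-r)) := by
        refine lintegral_ofReal_le_of_measure_lt_le (by fun_prop) (by fun_prop)
          (ae_of_all _ fun t => by positivity)
          ((ae_restrict_mem measurableSet_Ioo).mono fun s hs => Real.rpow_nonneg hs.1.le _)
          fun s hs => ?_
        have hset : Ioo 0 (min M (s ^ (-r⁻¹))) ⊆ {y | s < y ^ (-r)} ∩ Ioo 0 M := fun y hy =>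
          ⟨(lt_rpow_neg_iff hr0 hs hy.1).2 (hy.2.trans_le (min_le_right _ _)),
            hy.1, hy.2.trans_le (min_le_left _ _)⟩
        rw [Measure.restrict_apply' measurableSet_Ioo]
        refine le_trans ?_ (measure_mono hset)
        rw [Real.volume_Ioo, sub_zero, ENNReal.ofReal_min, hM, ENNReal.ofReal_toReal htop]
        exact le_min (measure_mono (subset_univ _)) (measure_lt_toReal_rpow_neg_le h hr0 hs)
    _ = ENNReal.ofReal (1 - r)⁻¹ * κ univ ^ (1 - r) := by
        rw [lintegral_Ioo_rpow_neg hr1 hM0, div_eq_inv_mul, ENNReal.ofReal_mul (by positivity),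
          ← ENNReal.ofReal_rpow_of_nonneg hM0 hr.le, ENNReal.ofReal_toReal htop]

end LayerCake

section LinearOrder

variable {α : Type*} [LinearOrder α] [TopologicalSpace α] [OrderTopology α]
  [MeasurableSpace α]

section BorelSpace

variable [BorelSpace α]

lemma measurable_measure_Iic (κ : Measure α) : Measurable fun x => κ (Iic x) :=
  Monotone.measurable fun _ _ hst => measure_mono (Iic_subset_Iic.2 hst)

lemma measurable_measure_Ici (κ : Measure α) : Measurable fun x => κ (Ici x) :=
  Antitone.measurable fun _ _ hst => measure_mono (Ici_subset_Ici.2 hst)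

end BorelSpace

variable [SecondCountableTopology α]

lemma measure_setOf_measure_Iic_lt_le (κ : Measure α) (c : ℝ≥0∞) :
    κ {t | κ (Iic t) < c} ≤ c := by
  set A := {t | κ (Iic t) < c}
  have hA : OrdConnected A :=
    ⟨fun s _ t ht u hu => (measure_mono (Iic_subset_Iic.2 hu.2)).trans_lt ht⟩
  have hcover : A ⊆ ⋃ t : A, Iic (t : α) := fun t ht => mem_iUnion.2 ⟨⟨t, ht⟩, le_rfl⟩
  have hmono : Monotone fun t : A => Iic (t : α) := fun s t hst => Iic_subset_Iic.2 hst
  calc κ A ≤ κ (⋃ t : A, Iic (t : α)) := measure_mono hcover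
    _ = ⨆ t : A, κ (Iic (t : α)) := hmono.measure_iUnion
    _ ≤ c := iSup_le fun t => t.2.le

variable [BorelSpace α]

lemma setLIntegral_Iic_rpow_neg_half_le (κ : Measure α) (x : α) :
    ∫⁻ t in Iic x, κ (Iic t) ^ (-(1 / 2) : ℝ) ∂κ ≤ 2 * κ (Iic x) ^ (1 / 2 : ℝ) := by
  have h := lintegral_rpow_neg_le_of_measure_lt_le (κ := κ.restrict (Iic x))
    (measurable_measure_Iic κ)
    (fun c => (Measure.restrict_apply_le _ _).trans (measure_setOf_measure_Iic_lt_le κ c))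
    one_half_pos one_half_lt_one
  rw [Measure.restrict_apply_univ] at h
  norm_num at h ⊢
  exact h

lemma setLIntegral_Ici_rpow_neg_half_le (κ : Measure α) (x : α) :
    ∫⁻ t in Ici x, κ (Ici t) ^ (-(1 / 2) : ℝ) ∂κ ≤ 2 * κ (Ici x) ^ (1 / 2 : ℝ) :=
  setLIntegral_Iic_rpow_neg_half_le (α := αᵒᵈ) κ x

lemma lintegral_setLIntegral_Iic_eq {κ lam : Measure α} [SFinite κ] [SFinite lam]
    {F : α → α → ℝ≥0∞} (hF : Measurable (Function.uncurry F)) :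
    ∫⁻ x, ∫⁻ t in Iic x, F x t ∂lam ∂κ = ∫⁻ t, ∫⁻ x in Ici t, F x t ∂κ ∂lam := by
  have hmeas : MeasurableSet {q : α × α | q.2 ≤ q.1} :=
    measurableSet_le measurable_snd measurable_fst
  simp_rw [← lintegral_indicator measurableSet_Iic, ← lintegral_indicator measurableSet_Ici]
  exact lintegral_lintegral_swap (hF.indicator hmeas).aemeasurable

end LinearOrder

section Young

variable {Φ Φinv : ℝ → ℝ}

lemma IsYoung.apply_abs (hΦ : IsYoung Φ) (t : ℝ) : Φ |t| = Φ t := by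
  rcases abs_choice t with h | h <;> rw [h]
  exact hΦ.2.1 t

lemma IsYoung.apply_le_apply (hΦ : IsYoung Φ) {s t : ℝ} (hst : |s| ≤ |t|) : Φ s ≤ Φ t := by
  have hs : s ∈ segment ℝ (-t) t := by
    rw [segment_eq_uIcc, mem_uIcc]
    rcases abs_choice t with ht | ht <;> rw [ht, abs_le] at hst
    · exact Or.inl hst
    · exact Or.inr (by rwa [neg_neg] at hst)
  have h := hΦ.1.le_on_segment (mem_univ (-t)) (mem_univ t) hs
  rwa [hΦ.2.1, max_self] at h

lemma IsYoung.continuous (hΦ : IsYoung Φ) : Continuous Φ :=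
  continuousOn_univ.1 (hΦ.1.continuousOn isOpen_univ)

lemma IsYoung.apply_add_div_add_le (hΦ : IsYoung Φ) {c d : ℝ} (hc : 0 < c) (hd : 0 < d)
    (s t : ℝ) :
    Φ ((s + t) / (c + d)) ≤ c / (c + d) * Φ (s / c) + d / (c + d) * Φ (t / d) := by
  have hcd : 0 < c + d := add_pos hc hd
  have h := hΦ.1.2 (mem_univ (s / c)) (mem_univ (t / d)) (div_nonneg hc.le hcd.le)
    (div_nonneg hd.le hcd.le) (by rw [← add_div, div_self hcd.ne'])
  have hcomb : c / (c + d) * (s / c) + d / (c + d) * (t / d) = (s + t) / (c + d) := by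
    field_simp
  simpa only [smul_eq_mul, hcomb] using h

lemma IsYoungInv.apply_half_pos (hΦ : IsYoung Φ) (hinv : IsYoungInv Φ Φinv) : 0 < Φinv (1 / 2) := by
  refine (hinv.1 _ one_half_pos.le).lt_of_ne fun h => ?_
  have hhalf := hinv.2.1 (1 / 2) one_half_pos.le
  rw [← h, hΦ.2.2.1] at hhalf
  exact one_half_pos.ne hhalf

lemma IsYoungInv.monotoneOn (hΦ : IsYoung Φ) (hinv : IsYoungInv Φ Φinv) :
    MonotoneOn Φinv (Ici 0) := by
  intro s hs t ht hst
  by_contra! hlt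
  have hts : t ≤ s := by
    rw [← hinv.2.1 t ht, ← hinv.2.1 s hs]
    exact hΦ.apply_le_apply (abs_le_abs_of_nonneg (hinv.1 t ht) hlt.le)
  exact hlt.ne (by rw [le_antisymm hst hts])

lemma IsYoungInv.measurable_comp {α : Type*} [MeasurableSpace α] (hΦ : IsYoung Φ)
    (hinv : IsYoungInv Φ Φinv) {g : α → ℝ} (hg : Measurable g) (hg0 : ∀ x, 0 ≤ g x) :
    Measurable fun x => Φinv (g x) := by
  have hmono : Monotone fun t => Φinv (max t 0) := fun s t hst =>
    hinv.monotoneOn hΦ (le_max_right s 0) (le_max_right t 0) (max_le_max_right 0 hst)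
  simpa only [Function.comp_def, max_eq_left (hg0 _)] using hmono.measurable.comp hg

end Young

section Jensen

variable {α : Type*} [MeasurableSpace α] {lam : Measure α} {h : α → ℝ} {y : ℝ}

/- Affine minorants of `Λ` have nonpositive constant term, so `lam` need only be a
sub-probability measure. -/
lemma ofReal_convexOn_le_lintegral {Λ : ℝ → ℝ} (hΛ : ConvexOn ℝ univ Λ) (h0 : Λ 0 ≤ 0)
    (hlam : lam univ ≤ 1) (hm : Measurable h) (hy0 : 0 ≤ y)
    (hy : ENNReal.ofReal y ≤ ∫⁻ t, ENNReal.ofReal (h t) ∂lam) :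
    ENNReal.ofReal (Λ y) ≤ ∫⁻ t, ENNReal.ofReal (Λ (h t)) ∂lam := by
  rcases hy0.eq_or_lt with rfl | hy0
  · simp [ENNReal.ofReal_of_nonpos h0]
  have hcont : LowerSemicontinuousOn Λ univ :=
    (hΛ.continuousOn isOpen_univ).lowerSemicontinuousOn
  refine ENNReal.le_of_forall_nnreal_lt fun e he => ?_
  have hey : (e : ℝ) < Λ y := (ENNReal.lt_ofReal_iff_toReal_lt ENNReal.coe_ne_top).1 he
  obtain ⟨c, d, hmin, heq⟩ :=
    hΛ.exists_affine_le_of_lt_real (mem_univ y) hey isClosed_univ hcont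
  have hd : 0 ≤ -d := by linarith [hmin 0 (mem_univ 0)]
  have hc : 0 ≤ c := by
    by_contra! hneg
    nlinarith [e.coe_nonneg]
  refine (ENNReal.add_le_add_iff_right (ENNReal.ofReal_ne_top (r := -d))).1 ?_
  calc (e : ℝ≥0∞) + ENNReal.ofReal (-d) = ENNReal.ofReal c * ENNReal.ofReal y := by
        rw [← ENNReal.ofReal_coe_nnreal, ← ENNReal.ofReal_add e.coe_nonneg hd,
          ← ENNReal.ofReal_mul hc]
        congr 1
        linarith
    _ ≤ ∫⁻ t, ENNReal.ofReal c * ENNReal.ofReal (h t) ∂lam := by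
        rw [lintegral_const_mul _ hm.ennreal_ofReal]
        gcongr
    _ ≤ ∫⁻ t, (ENNReal.ofReal (Λ (h t)) + ENNReal.ofReal (-d)) ∂lam := by
        gcongr with t
        rw [← ENNReal.ofReal_mul hc]
        refine (ENNReal.ofReal_le_ofReal ?_).trans ENNReal.ofReal_add_le
        linarith [hmin (h t) (mem_univ _)]
    _ ≤ ∫⁻ t, ENNReal.ofReal (Λ (h t)) ∂lam + ENNReal.ofReal (-d) := by
        rw [lintegral_add_right _ measurable_const, lintegral_const]
        gcongr
        exact mul_le_of_le_one_right' hlam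

lemma ofReal_young_le_lintegral {Φ : ℝ → ℝ} {p : ℝ} (hΦ : IsYoung Φ) (hp : 0 < p)
    (hΛ : ConvexOn ℝ univ fun t => Φ (|t| ^ (1 / p))) (hlam : lam univ ≤ 1) (hm : Measurable h)
    (hh : ∀ t, 0 ≤ h t) (hy : ‖y‖ₑ ^ p ≤ ∫⁻ t, ENNReal.ofReal (h t) ^ p ∂lam) :
    ENNReal.ofReal (Φ y) ≤ ∫⁻ t, ENNReal.ofReal (Φ (h t)) ∂lam := by
  have hroot {z : ℝ} (hz : 0 ≤ z) : |z ^ p| ^ (1 / p) = z := by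
    rw [abs_of_nonneg (by positivity), one_div, Real.rpow_rpow_inv hz hp.ne']
  have hpow {z : ℝ} (hz : 0 ≤ z) : ENNReal.ofReal z ^ p = ENNReal.ofReal (z ^ p) :=
    ENNReal.ofReal_rpow_of_nonneg hz hp.le
  have h0 : Φ (|0| ^ (1 / p)) ≤ 0 := by
    rw [abs_zero, Real.zero_rpow (one_div_pos.2 hp).ne', hΦ.2.2.1]
  rw [Real.enorm_eq_ofReal_abs, hpow (abs_nonneg y)] at hy
  simp_rw [hpow (hh _)] at hy
  have hJ := ofReal_convexOn_le_lintegral hΛ h0 hlam (hm.pow_const p) (by positivity) hy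
  simpa only [hroot (abs_nonneg y), hroot (hh _), hΦ.apply_abs] using hJ

end Jensen

section GaugeNorm

variable {Ω : Type*} [MeasurableSpace Ω] {κ : Measure Ω} {Φ : ℝ → ℝ} {f g : Ω → ℝ} {c : ℝ}

lemma luxNormGen_le_ofReal (hc : 0 < c) (h : ∫⁻ x, ENNReal.ofReal (Φ (f x / c)) ∂κ ≤ 1) :
    luxNormGen Φ κ f ≤ ENNReal.ofReal c :=
  sInf_le ⟨c, hc, rfl, h⟩

lemma luxNormGen_mono (hΦ : IsYoung Φ) (hfg : ∀ᵐ x ∂κ, |f x| ≤ |g x|) :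
    luxNormGen Φ κ f ≤ luxNormGen Φ κ g := by
  refine le_sInf ?_
  rintro _ ⟨c, hc, rfl, hg⟩
  refine luxNormGen_le_ofReal hc (le_trans (lintegral_mono_ae ?_) hg)
  filter_upwards [hfg] with x hx
  refine ENNReal.ofReal_le_ofReal (hΦ.apply_le_apply ?_)
  rw [abs_div, abs_div]
  gcongr

lemma luxNormGen_eq_zero_of_ae_eq_zero (hΦ : IsYoung Φ) (hf : f =ᵐ[κ] 0) :
    luxNormGen Φ κ f = 0 := by
  refine le_antisymm (ENNReal.le_of_forall_pos_le_add fun ε hε _ => ?_) zero_le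
  rw [zero_add, ← ENNReal.ofReal_coe_nnreal]
  refine luxNormGen_le_ofReal (NNReal.coe_pos.2 hε) ?_
  have hzero : ∀ᵐ x ∂κ, ENNReal.ofReal (Φ (f x / ε)) = 0 := by
    filter_upwards [hf] with x hx
    simp [hx, hΦ.2.2.1]
  simp [lintegral_congr_ae hzero]

lemma luxNormGen_const_mul_le (hc : 0 < c) :
    luxNormGen Φ κ (fun x => c * f x) ≤ ENNReal.ofReal c * luxNormGen Φ κ f := by
  have hc0 : ENNReal.ofReal c ≠ 0 := (ENNReal.ofReal_pos.2 hc).ne'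
  rw [mul_comm, ← ENNReal.div_le_iff_le_mul (Or.inl hc0) (Or.inl ENNReal.ofReal_ne_top)]
  refine le_sInf ?_
  rintro _ ⟨d, hd, rfl, hf⟩
  rw [ENNReal.div_le_iff_le_mul (Or.inl hc0) (Or.inl ENNReal.ofReal_ne_top), mul_comm,
    ← ENNReal.ofReal_mul hc.le]
  refine luxNormGen_le_ofReal (mul_pos hc hd) ?_
  simpa only [mul_div_mul_left _ _ hc.ne'] using hf

lemma luxNormGen_add_le (hΦ : IsYoung Φ) (hf : Measurable f) :
    luxNormGen Φ κ (fun x => f x + g x) ≤ luxNormGen Φ κ f + luxNormGen Φ κ g := by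
  conv_rhs => rw [luxNormGen, luxNormGen, ENNReal.sInf_add]
  refine le_iInf₂ ?_
  rintro _ ⟨c, hc, rfl, hfc⟩
  rw [add_comm, ENNReal.sInf_add]
  refine le_iInf₂ ?_
  rintro _ ⟨d, hd, rfl, hgd⟩
  rw [add_comm, ← ENNReal.ofReal_add hc.le hd.le]
  have hcd : 0 < c + d := add_pos hc hd
  refine luxNormGen_le_ofReal hcd ?_
  have hfm : Measurable fun x => ENNReal.ofReal (Φ (f x / c)) :=
    (hΦ.continuous.measurable.comp (hf.div_const c)).ennreal_ofReal
  calc ∫⁻ x, ENNReal.ofReal (Φ ((f x + g x) / (c + d))) ∂κ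
      ≤ ∫⁻ x, (ENNReal.ofReal (c / (c + d)) * ENNReal.ofReal (Φ (f x / c)) +
          ENNReal.ofReal (d / (c + d)) * ENNReal.ofReal (Φ (g x / d))) ∂κ := by
        gcongr with x
        rw [← ENNReal.ofReal_mul (by positivity), ← ENNReal.ofReal_mul (by positivity)]
        exact (ENNReal.ofReal_le_ofReal (hΦ.apply_add_div_add_le hc hd _ _)).trans
          ENNReal.ofReal_add_le
    _ = ENNReal.ofReal (c / (c + d)) * ∫⁻ x, ENNReal.ofReal (Φ (f x / c)) ∂κ +
          ENNReal.ofReal (d / (c + d)) * ∫⁻ x, ENNReal.ofReal (Φ (g x / d)) ∂κ := by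
        rw [lintegral_add_left (hfm.const_mul _), lintegral_const_mul' _ _ ENNReal.ofReal_ne_top,
          lintegral_const_mul' _ _ ENNReal.ofReal_ne_top]
    _ ≤ ENNReal.ofReal (c / (c + d)) * 1 + ENNReal.ofReal (d / (c + d)) * 1 := by gcongr
    _ = 1 := by
        rw [mul_one, mul_one, ← ENNReal.ofReal_add (by positivity) (by positivity), ← add_div,
          div_self hcd.ne', ENNReal.ofReal_one]

end GaugeNorm

section MassGauge

variable {Φ Φinv : ℝ → ℝ}

/-- The quantity `Φ⁻¹(m ^ (-1/2))` entering `K_{p,Φ}`, where `m` is the mass of an interval. The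
real power sends both `m = 0` and `m = ∞` to `Φ⁻¹(0) = 0`; for `m = 0` the limiting value would be
`∞`. -/
def massGauge (Φinv : ℝ → ℝ) (m : ℝ≥0∞) : ℝ := Φinv (m.toReal ^ (-(1 / 2) : ℝ))

lemma massGauge_nonneg (hinv : IsYoungInv Φ Φinv) (m : ℝ≥0∞) : 0 ≤ massGauge Φinv m :=
  hinv.1 _ (by positivity)

lemma ofReal_apply_massGauge_le (hinv : IsYoungInv Φ Φinv) (m : ℝ≥0∞) :
    ENNReal.ofReal (Φ (massGauge Φinv m)) ≤ m ^ (-(1 / 2) : ℝ) := by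
  rw [massGauge, hinv.2.1 _ (by positivity), ENNReal.toReal_rpow]
  exact ENNReal.ofReal_toReal_le

lemma measurable_massGauge_comp {α : Type*} [MeasurableSpace α] (hΦ : IsYoung Φ)
    (hinv : IsYoungInv Φ Φinv) {M : α → ℝ≥0∞} (hM : Measurable M) :
    Measurable fun x => massGauge Φinv (M x) :=
  hinv.measurable_comp hΦ (hM.ennreal_toReal.pow_const _) fun _ => by positivity

end MassGauge

section Holder

lemma rpow_one_div_two_mul_le {q : ℝ} {u v B : ℝ≥0∞} (hq : q ≠ 0)
    (h : v ^ (1 / q) ≤ B * u ^ 2) : v ^ (1 / (2 * q)) ≤ B ^ (1 / 2 : ℝ) * u := by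
  calc v ^ (1 / (2 * q)) = (v ^ (1 / q)) ^ (1 / 2 : ℝ) := by
        rw [← ENNReal.rpow_mul]; congr 1; field_simp
    _ ≤ (B * u ^ 2) ^ (1 / 2 : ℝ) := by gcongr
    _ = B ^ (1 / 2 : ℝ) * u := by
        rw [ENNReal.mul_rpow_of_nonneg _ _ (by positivity), ← ENNReal.rpow_natCast,
          ← ENNReal.rpow_mul]
        norm_num

lemma ae_eq_zero_of_lintegral_rpow_mul_eq_zero {α : Type*} [MeasurableSpace α]
    {σ : Measure α} {p : ℝ} {G w : α → ℝ≥0∞} (hp : 0 < p) (hG : Measurable G)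
    (hw : Measurable w) (hw0 : ∀ᵐ t ∂σ, w t ≠ 0) (h : ∫⁻ t, G t ^ p * w t ∂σ = 0) :
    G =ᵐ[σ] 0 := by
  filter_upwards [(lintegral_eq_zero_iff (by fun_prop)).1 h, hw0] with t ht hwt
  exact (ENNReal.rpow_eq_zero_iff_of_pos hp).1 ((mul_eq_zero.1 ht).resolve_right hwt)

/- With `V = 0` only where `N = 0`, any power of `V` can be moved from one factor to the other. -/
lemma lintegral_mul_le_rpow_mul_rpow_of_weight {α : Type*} [MeasurableSpace α] {σ : Measure α}
    {p q : ℝ} {G N w V : α → ℝ≥0∞} (hpq : p.HolderConjugate q) (hG : Measurable G)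
    (hN : Measurable N) (hw : Measurable w) (hV : Measurable V)
    (hw0 : ∀ᵐ t ∂σ, w t ≠ 0 ∧ w t ≠ ⊤) (hNV : ∀ᵐ t ∂σ, V t = 0 → N t = 0)
    (hVtop : ∀ᵐ t ∂σ, V t ≠ ⊤) (r : ℝ) :
    ∫⁻ t, G t * N t ∂σ ≤ (∫⁻ t, G t ^ p * w t * V t ^ (r * p) ∂σ) ^ (1 / p) *
      (∫⁻ t, N t ^ q * w t ^ (1 - q) * V t ^ (-(r * q)) ∂σ) ^ (1 / q) := by
  have hexp : -(1 / p) * q = 1 - q := by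
    have := hpq.inv_add_inv_eq_one
    field_simp [hpq.ne_zero, hpq.symm.ne_zero] at this ⊢
    linarith
  have hsplit : ∀ᵐ t ∂σ, G t * N t =
      (G t * w t ^ (1 / p) * V t ^ r) * (N t * w t ^ (-(1 / p)) * V t ^ (-r)) := by
    filter_upwards [hw0, hNV, hVtop] with t hwt hNt hVt
    rcases eq_or_ne (V t) 0 with hVt0 | hVt0
    · simp [hNt hVt0]
    have hww : w t ^ (1 / p) * w t ^ (-(1 / p)) = 1 := by
      rw [← ENNReal.rpow_add _ _ hwt.1 hwt.2, add_neg_cancel, ENNReal.rpow_zero]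
    have hVV : V t ^ r * V t ^ (-r) = 1 := by
      rw [← ENNReal.rpow_add _ _ hVt0 hVt, add_neg_cancel, ENNReal.rpow_zero]
    calc G t * N t = G t * N t * (w t ^ (1 / p) * w t ^ (-(1 / p))) * (V t ^ r * V t ^ (-r)) := by
          rw [hww, hVV, mul_one, mul_one]
      _ = _ := by ring
  have hprimal (t : α) : (G t * w t ^ (1 / p) * V t ^ r) ^ p = G t ^ p * w t * V t ^ (r * p) := by
    rw [ENNReal.mul_rpow_of_nonneg _ _ hpq.nonneg, ENNReal.mul_rpow_of_nonneg _ _ hpq.nonneg,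
      ← ENNReal.rpow_mul, ← ENNReal.rpow_mul, one_div_mul_cancel hpq.ne_zero, ENNReal.rpow_one]
  have hdual (t : α) : (N t * w t ^ (-(1 / p)) * V t ^ (-r)) ^ q =
      N t ^ q * w t ^ (1 - q) * V t ^ (-(r * q)) := by
    rw [ENNReal.mul_rpow_of_nonneg _ _ hpq.symm.nonneg,
      ENNReal.mul_rpow_of_nonneg _ _ hpq.symm.nonneg, ← ENNReal.rpow_mul, ← ENNReal.rpow_mul, hexp,
      neg_mul]
  rw [lintegral_congr_ae hsplit]
  simp only [← hprimal, ← hdual]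
  exact ENNReal.lintegral_mul_le_Lp_mul_Lq _ hpq (by fun_prop) (by fun_prop)

variable {α : Type*} [LinearOrder α] [TopologicalSpace α] [OrderTopology α]
  [SecondCountableTopology α] [MeasurableSpace α] {p q : ℝ} {σ : Measure α}
  {G N w U : α → ℝ≥0∞} {x : α} {B : ℝ≥0∞}

/-- The measure `N ^ q * w ^ (1 - q) dσ`, with `q` the exponent conjugate to `p`. Its values on
half-lines, raised to the power `1 / q`, are the factors of the Muckenhoupt constant dual to `w`. -/
def dualMeasure {α : Type*} [MeasurableSpace α] (σ : Measure α) (N w : α → ℝ≥0∞) (q : ℝ) :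
    Measure α :=
  σ.withDensity fun t => N t ^ q * w t ^ (1 - q)

lemma ae_eq_zero_of_dualMeasure_Iic_eq_zero (hq : 0 < q) (hN : Measurable N) (hw : Measurable w)
    (hw0 : ∀ᵐ t ∂σ, w t ≠ 0 ∧ w t ≠ ⊤) :
    ∀ᵐ t ∂σ, dualMeasure σ N w q (Iic t) = 0 → N t = 0 := by
  have hpos := ae_ne_zero_of_measure_lt_le
    (measure_setOf_measure_Iic_lt_le (dualMeasure σ N w q))
  rw [dualMeasure, ae_withDensity_iff (by fun_prop)] at hpos
  filter_upwards [hpos, hw0] with t ht hwt hzero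
  have hdens : N t ^ q * w t ^ (1 - q) = 0 := not_not.1 fun h => ht h hzero
  simpa [ENNReal.rpow_eq_zero_iff, hwt.1, hwt.2, hq, hq.not_gt] using hdens

variable [BorelSpace α]

/- The weight `V ^ (1 / (2q))`, with `V` the distribution function of the dual measure, is
Muckenhoupt's choice in Hölder's inequality: the dual factor becomes `∫ V ^ (-1/2) dV`. -/
lemma setLIntegral_Iic_mul_le_rpow_mul_rpow (hpq : p.HolderConjugate q) (hG : Measurable G)
    (hN : Measurable N) (hw : Measurable w) (hw0 : ∀ᵐ t ∂σ, w t ≠ 0 ∧ w t ≠ ⊤)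
    (hx : dualMeasure σ N w q (Iic x) ≠ ⊤) :
    ∫⁻ t in Iic x, G t * N t ∂σ ≤
      (∫⁻ t in Iic x,
          G t ^ p * w t * dualMeasure σ N w q (Iic t) ^ (1 / (2 * q) * p) ∂σ) ^ (1 / p) *
        (2 * dualMeasure σ N w q (Iic x) ^ (1 / 2 : ℝ)) ^ (1 / q) := by
  set V : α → ℝ≥0∞ := fun t => dualMeasure σ N w q (Iic t)
  have hV : Measurable V := measurable_measure_Iic _
  have hq0 : 0 < q := hpq.symm.pos
  have hVtop : ∀ᵐ t ∂σ.restrict (Iic x), V t ≠ ⊤ := by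
    filter_upwards [ae_restrict_mem measurableSet_Iic] with t htx
    exact ne_top_of_le_ne_top hx (measure_mono (Iic_subset_Iic.2 htx))
  have hdual : ∫⁻ t in Iic x, N t ^ q * w t ^ (1 - q) * V t ^ (-(1 / (2 * q) * q)) ∂σ ≤
      2 * dualMeasure σ N w q (Iic x) ^ (1 / 2 : ℝ) := by
    have hexp : -(1 / (2 * q) * q) = -(1 / 2) := by field_simp
    refine le_of_eq_of_le ?_ (setLIntegral_Iic_rpow_neg_half_le (dualMeasure σ N w q) x)
    have hrestrict : (dualMeasure σ N w q).restrict (Iic x) =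
        (σ.restrict (Iic x)).withDensity fun t => N t ^ q * w t ^ (1 - q) :=
      restrict_withDensity measurableSet_Iic _
    rw [hexp, hrestrict, lintegral_withDensity_eq_lintegral_mul _ (by fun_prop) (hV.pow_const _)]
    rfl
  refine (lintegral_mul_le_rpow_mul_rpow_of_weight hpq hG hN hw hV (ae_restrict_of_ae hw0)
    (ae_restrict_of_ae (ae_eq_zero_of_dualMeasure_Iic_eq_zero hq0 hN hw hw0)) hVtop
    (1 / (2 * q))).trans ?_
  gcongr

lemma setLIntegral_Iic_mul_le_of_dualMeasure_le (hpq : p.HolderConjugate q) (hG : Measurable G)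
    (hN : Measurable N) (hw : Measurable w) (hU : Measurable U)
    (hw0 : ∀ᵐ t ∂σ, w t ≠ 0 ∧ w t ≠ ⊤) (hx : dualMeasure σ N w q (Iic x) ≠ ⊤)
    (hB : ∀ᵐ t ∂σ, dualMeasure σ N w q (Iic t) ^ (1 / q) ≤ B * U t ^ 2)
    (hBx : dualMeasure σ N w q (Iic x) ^ (1 / q) ≤ B * U x ^ 2) :
    ∫⁻ t in Iic x, G t * N t ∂σ ≤
      (∫⁻ t in Iic x, G t ^ p * w t * U t ^ p ∂σ) ^ (1 / p) * (2 * B * U x) := by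
  have hp0 : 0 < p := hpq.pos
  have hq0 : 0 < q := hpq.symm.pos
  have hprimal : ∫⁻ t in Iic x, G t ^ p * w t * dualMeasure σ N w q (Iic t) ^ (1 / (2 * q) * p) ∂σ ≤
      (B ^ (1 / 2 : ℝ)) ^ p * ∫⁻ t in Iic x, G t ^ p * w t * U t ^ p ∂σ := by
    rw [← lintegral_const_mul _ (by fun_prop)]
    refine lintegral_mono_ae (ae_restrict_of_ae ?_)
    filter_upwards [hB] with t ht
    rw [ENNReal.rpow_mul, mul_left_comm, ← ENNReal.mul_rpow_of_nonneg _ _ hp0.le]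
    gcongr
    exact rpow_one_div_two_mul_le hq0.ne' ht
  have hdual : (2 * dualMeasure σ N w q (Iic x) ^ (1 / 2 : ℝ)) ^ (1 / q) ≤
      2 * (B ^ (1 / 2 : ℝ) * U x) := by
    rw [ENNReal.mul_rpow_of_nonneg _ _ (by positivity), ← ENNReal.rpow_mul,
      show 1 / 2 * (1 / q) = 1 / (2 * q) by ring]
    gcongr
    · simpa using ENNReal.rpow_le_rpow_of_exponent_le one_le_two
        ((div_le_one hq0).2 hpq.symm.lt.le)
    · exact rpow_one_div_two_mul_le hq0.ne' hBx
  refine (setLIntegral_Iic_mul_le_rpow_mul_rpow hpq hG hN hw hw0 hx).trans ?_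
  calc _ ≤ ((B ^ (1 / 2 : ℝ)) ^ p * ∫⁻ t in Iic x, G t ^ p * w t * U t ^ p ∂σ) ^ (1 / p) *
        (2 * (B ^ (1 / 2 : ℝ) * U x)) := by gcongr
    _ = (∫⁻ t in Iic x, G t ^ p * w t * U t ^ p ∂σ) ^ (1 / p) *
        (2 * (B ^ (1 / 2 : ℝ) * B ^ (1 / 2 : ℝ)) * U x) := by
      rw [ENNReal.mul_rpow_of_nonneg _ _ (by positivity), ← ENNReal.rpow_mul,
        mul_one_div_cancel hp0.ne', ENNReal.rpow_one]
      ring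
    _ = _ := by
      rw [← ENNReal.rpow_add_of_nonneg _ _ (by norm_num) (by norm_num), add_halves,
        ENNReal.rpow_one]

lemma setLIntegral_Iic_mul_le_of_inv_mul_dualMeasure_le (hpq : p.HolderConjugate q)
    (hG : Measurable G) (hN : Measurable N) (hw : Measurable w) (hU : Measurable U)
    (hUtop : ∀ t, U t ≠ ⊤) (hw0 : ∀ᵐ t ∂σ, w t ≠ 0 ∧ w t ≠ ⊤) (hBtop : B ≠ ⊤)
    (hB : ∀ᵐ t ∂σ, (U t ^ 2)⁻¹ * dualMeasure σ N w q (Iic t) ^ (1 / q) ≤ B)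
    (hBx : (U x ^ 2)⁻¹ * dualMeasure σ N w q (Iic x) ^ (1 / q) ≤ B) :
    ∫⁻ t in Iic x, G t * N t ∂σ ≤
      (∫⁻ t in Iic x, G t ^ p * w t * U t ^ p ∂σ) ^ (1 / p) * (2 * B * U x) := by
  have hmul {t : α} (h : (U t ^ 2)⁻¹ * dualMeasure σ N w q (Iic t) ^ (1 / q) ≤ B) :
      dualMeasure σ N w q (Iic t) ^ (1 / q) ≤ B * U t ^ 2 := by
    rwa [mul_comm, ← div_eq_mul_inv, ENNReal.div_le_iff_le_mul (Or.inr hBtop)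
      (Or.inl (ENNReal.pow_ne_top (hUtop t)))] at h
  have hx : dualMeasure σ N w q (Iic x) ≠ ⊤ := fun htop => by
    have h := hmul hBx
    rw [htop, ENNReal.top_rpow_of_pos (one_div_pos.2 hpq.symm.pos), top_le_iff] at h
    exact ENNReal.mul_ne_top hBtop (ENNReal.pow_ne_top (hUtop x)) h
  exact setLIntegral_Iic_mul_le_of_dualMeasure_le hpq hG hN hw hU hw0 hx
    (hB.mono fun t => hmul) (hmul hBx)

end Holder

section Modular

variable {α : Type*} [MeasurableSpace α] {Φ Φinv : ℝ → ℝ} {p : ℝ} {lam : Measure α}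
  {M : α → ℝ≥0∞}

lemma Submult.apply_half_mul_mul_le (hsub : Submult Φ) (hΦ : IsYoung Φ) (hinv : IsYoungInv Φ Φinv)
    {s t : ℝ} (hs : 0 ≤ s) (ht : 0 ≤ t) : Φ (Φinv (1 / 2) * s * t) ≤ 2⁻¹ * Φ s * Φ t := by
  have hφ : 0 ≤ Φinv (1 / 2) := hinv.1 _ one_half_pos.le
  calc Φ (Φinv (1 / 2) * s * t) ≤ Φ (Φinv (1 / 2) * s) * Φ t := hsub _ _ (by positivity) ht
    _ ≤ Φ (Φinv (1 / 2)) * Φ s * Φ t := by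
        gcongr
        · exact hΦ.2.2.2.1 t
        · exact hsub _ _ hφ hs
    _ = 2⁻¹ * Φ s * Φ t := by rw [hinv.2.1 _ one_half_pos.le, one_div]

lemma enorm_div_rpow_le_lintegral {u : α → ℝ} {v y φ : ℝ} (hp : 0 < p) (hu : Measurable u)
    (hv : 0 ≤ v) (hφ : 0 < φ)
    (hy : ‖y‖ₑ ≤ (∫⁻ t, ENNReal.ofReal (u t) ^ p ∂lam) ^ (1 / p) * (2 * ENNReal.ofReal v)) :
    ‖y / (2 * φ⁻¹)‖ₑ ^ p ≤ ∫⁻ t, ENNReal.ofReal (φ * v * u t) ^ p ∂lam := by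
  have hdiv : ‖y / (2 * φ⁻¹)‖ₑ ≤
      (∫⁻ t, ENNReal.ofReal (u t) ^ p ∂lam) ^ (1 / p) * ENNReal.ofReal (φ * v) := by
    have hy' : y / (2 * φ⁻¹) = φ / 2 * y := by field_simp
    rw [hy', enorm_mul, Real.enorm_of_nonneg (by positivity)]
    refine (mul_le_mul_right hy _).trans_eq ?_
    rw [mul_left_comm, ← mul_assoc (ENNReal.ofReal (φ / 2)), ← ENNReal.ofReal_ofNat,
      ← ENNReal.ofReal_mul (by positivity), div_mul_cancel₀ _ two_ne_zero,
      ← ENNReal.ofReal_mul hφ.le]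
  refine (ENNReal.rpow_le_rpow hdiv hp.le).trans_eq ?_
  rw [ENNReal.mul_rpow_of_nonneg _ _ hp.le, ← ENNReal.rpow_mul, one_div_mul_cancel hp.ne',
    ENNReal.rpow_one, mul_comm, ← lintegral_const_mul _ (by fun_prop)]
  simp_rw [ENNReal.ofReal_mul (mul_nonneg hφ.le hv), ENNReal.mul_rpow_of_nonneg _ _ hp.le]

/- Jensen's inequality applies to `t ↦ Φ⁻¹(1/2) * massGauge m * massGauge (M t)`;
submultiplicativity then separates the variables and leaves negative square roots of the masses. -/
lemma ofReal_apply_div_le_lintegral (hp : 0 < p) (hΦ : IsYoung Φ) (hsub : Submult Φ)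
    (hinv : IsYoungInv Φ Φinv) (hΛ : ConvexOn ℝ univ fun t => Φ (|t| ^ (1 / p)))
    (hM : Measurable M) (hlam : lam univ ≤ 1) {m : ℝ≥0∞} {y : ℝ}
    (hy : ‖y‖ₑ ≤ (∫⁻ t, ENNReal.ofReal (massGauge Φinv (M t)) ^ p ∂lam) ^ (1 / p) *
      (2 * ENNReal.ofReal (massGauge Φinv m))) :
    ENNReal.ofReal (Φ (y / (2 * (Φinv (1 / 2))⁻¹))) ≤
      ∫⁻ t, 2⁻¹ * m ^ (-(1 / 2) : ℝ) * M t ^ (-(1 / 2) : ℝ) ∂lam := by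
  have hφ := hinv.apply_half_pos hΦ
  have hu := measurable_massGauge_comp hΦ hinv hM
  have hu0 (m : ℝ≥0∞) : 0 ≤ massGauge Φinv m := massGauge_nonneg hinv m
  refine (ofReal_young_le_lintegral hΦ hp hΛ hlam (hu.const_mul _)
    (fun t => mul_nonneg (mul_nonneg hφ.le (hu0 m)) (hu0 (M t)))
    (enorm_div_rpow_le_lintegral hp hu (hu0 m) hφ hy)).trans (lintegral_mono fun t => ?_)
  refine (ENNReal.ofReal_le_ofReal
    (hsub.apply_half_mul_mul_le hΦ hinv (hu0 m) (hu0 (M t)))).trans ?_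
  rw [ENNReal.ofReal_mul (mul_nonneg (by norm_num) (hΦ.2.2.2.1 _)),
    ENNReal.ofReal_mul (by norm_num), ENNReal.ofReal_inv_of_pos two_pos, ENNReal.ofReal_ofNat]
  gcongr <;> exact ofReal_apply_massGauge_le hinv _

end Modular

section Hardy

variable {α : Type*} [LinearOrder α] [TopologicalSpace α] [OrderTopology α]
  [SecondCountableTopology α] [MeasurableSpace α] [BorelSpace α]
  {Φ Φinv : ℝ → ℝ} {p q : ℝ} {σ κ lam : Measure α} {G N w g : α → ℝ≥0∞} {F : α → ℝ} {B : ℝ≥0∞}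

lemma lintegral_setLIntegral_Iic_rpow_neg_half_mul_le (κ lam : Measure α) [SFinite κ]
    [SFinite lam] :
    ∫⁻ x, ∫⁻ t in Iic x, 2⁻¹ * κ (Ici x) ^ (-(1 / 2) : ℝ) * κ (Ici t) ^ (-(1 / 2) : ℝ) ∂lam ∂κ ≤
      lam univ := by
  set M : α → ℝ≥0∞ := fun x => κ (Ici x)
  have hM : Measurable M := measurable_measure_Ici κ
  rw [lintegral_setLIntegral_Iic_eq (F := fun x t => 2⁻¹ * M x ^ (-(1 / 2) : ℝ) *
    M t ^ (-(1 / 2) : ℝ)) (by fun_prop), ← lintegral_one]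
  refine lintegral_mono fun t => ?_
  rw [lintegral_mul_const _ (by fun_prop), lintegral_const_mul _ (by fun_prop)]
  calc _ ≤ 2⁻¹ * (2 * M t ^ (1 / 2 : ℝ)) * M t ^ (-(1 / 2) : ℝ) := by
        gcongr
        exact setLIntegral_Ici_rpow_neg_half_le κ t
    _ = M t ^ (1 / 2 : ℝ) / M t ^ (1 / 2 : ℝ) := by
        rw [← mul_assoc, ENNReal.inv_mul_cancel two_ne_zero ENNReal.ofNat_ne_top, one_mul,
          ENNReal.rpow_neg, ← div_eq_mul_inv]
    _ ≤ 1 := ENNReal.div_self_le_one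

lemma luxNormGen_le_of_enorm_le_setLIntegral_Iic [SFinite κ] (hp : 0 < p) (hΦ : IsYoung Φ)
    (hsub : Submult Φ) (hinv : IsYoungInv Φ Φinv)
    (hΛ : ConvexOn ℝ univ fun t => Φ (|t| ^ (1 / p))) (hlam : lam univ ≤ 1)
    (hF : ∀ᵐ x ∂κ, ‖F x‖ₑ ≤
      (∫⁻ t in Iic x, ENNReal.ofReal (massGauge Φinv (κ (Ici t))) ^ p ∂lam) ^ (1 / p) *
        (2 * ENNReal.ofReal (massGauge Φinv (κ (Ici x))))) :
    luxNormGen Φ κ F ≤ ENNReal.ofReal (2 * (Φinv (1 / 2))⁻¹) := by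
  have : IsFiniteMeasure lam := ⟨hlam.trans_lt ENNReal.one_lt_top⟩
  have hφ := hinv.apply_half_pos hΦ
  refine luxNormGen_le_ofReal (by positivity) (le_trans (lintegral_mono_ae ?_)
    ((lintegral_setLIntegral_Iic_rpow_neg_half_mul_le κ lam).trans hlam))
  filter_upwards [hF] with x hx
  exact ofReal_apply_div_le_lintegral hp hΦ hsub hinv hΛ (measurable_measure_Ici κ)
    ((Measure.restrict_apply_le _ _).trans hlam) hx

/- Dividing the density `g` by its integral makes it a sub-probability measure. -/
lemma luxNormGen_le_of_enorm_le_setLIntegral_Iic_density [SFinite κ] (hp : 0 < p) (hΦ : IsYoung Φ)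
    (hsub : Submult Φ) (hinv : IsYoungInv Φ Φinv)
    (hΛ : ConvexOn ℝ univ fun t => Φ (|t| ^ (1 / p))) (hg : Measurable g)
    (hg0 : ∫⁻ t, g t ∂σ ≠ 0) (hgtop : ∫⁻ t, g t ∂σ ≠ ⊤) (hB0 : B ≠ 0) (hBtop : B ≠ ⊤)
    (hF : ∀ᵐ x ∂κ, ‖F x‖ₑ ≤
      (∫⁻ t in Iic x, g t * ENNReal.ofReal (massGauge Φinv (κ (Ici t))) ^ p ∂σ) ^ (1 / p) *
        (2 * B * ENNReal.ofReal (massGauge Φinv (κ (Ici x))))) :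
    luxNormGen Φ κ F ≤
      ENNReal.ofReal (2 * (Φinv (1 / 2))⁻¹) * B * (∫⁻ t, g t ∂σ) ^ (1 / p) := by
  set L := ∫⁻ t, g t ∂σ
  set u : α → ℝ≥0∞ := fun t => ENNReal.ofReal (massGauge Φinv (κ (Ici t)))
  have hu : Measurable u :=
    (measurable_massGauge_comp hΦ hinv (measurable_measure_Ici κ)).ennreal_ofReal
  have hL0 : L ^ (1 / p) ≠ 0 := (ENNReal.rpow_pos (pos_iff_ne_zero.2 hg0) hgtop).ne'
  have hLtop : L ^ (1 / p) ≠ ⊤ := ENNReal.rpow_ne_top_of_nonneg (by positivity) hgtop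
  set K := (B * L ^ (1 / p)).toReal
  have hK : 0 < K := ENNReal.toReal_pos (mul_ne_zero hB0 hL0) (ENNReal.mul_ne_top hBtop hLtop)
  have hKB : ENNReal.ofReal K = B * L ^ (1 / p) :=
    ENNReal.ofReal_toReal (ENNReal.mul_ne_top hBtop hLtop)
  have hlam : σ.withDensity (fun t => L⁻¹ * g t) univ ≤ 1 := by
    rw [withDensity_apply _ .univ, Measure.restrict_univ, lintegral_const_mul _ hg]
    exact ENNReal.inv_mul_le_one L
  have hcore : luxNormGen Φ κ (fun x => K⁻¹ * F x) ≤ ENNReal.ofReal (2 * (Φinv (1 / 2))⁻¹) := by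
    refine luxNormGen_le_of_enorm_le_setLIntegral_Iic hp hΦ hsub hinv hΛ hlam ?_
    filter_upwards [hF] with x hx
    rw [restrict_withDensity measurableSet_Iic,
      lintegral_withDensity_eq_lintegral_mul _ (by fun_prop) (hu.pow_const p)]
    simp only [Pi.mul_apply, mul_assoc]
    rw [lintegral_const_mul' _ _ (ENNReal.inv_ne_top.2 hg0),
      ENNReal.mul_rpow_of_nonneg _ _ (by positivity), ENNReal.inv_rpow, enorm_mul,
      enorm_inv hK.ne', Real.enorm_of_nonneg hK.le, hKB,
      ENNReal.mul_inv (Or.inl hB0) (Or.inl hBtop)]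
    refine (mul_le_mul_right hx _).trans_eq ?_
    calc B⁻¹ * (L ^ (1 / p))⁻¹ * ((∫⁻ t in Iic x, g t * u t ^ p ∂σ) ^ (1 / p) * (2 * B * u x))
        = B⁻¹ * B * ((L ^ (1 / p))⁻¹ * (∫⁻ t in Iic x, g t * u t ^ p ∂σ) ^ (1 / p) *
            (2 * u x)) := by ring
      _ = _ := by rw [ENNReal.inv_mul_cancel hB0 hBtop, one_mul]
  calc luxNormGen Φ κ F = luxNormGen Φ κ fun x => K * (K⁻¹ * F x) := by
        simp only [mul_inv_cancel_left₀ hK.ne']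
    _ ≤ ENNReal.ofReal K * ENNReal.ofReal (2 * (Φinv (1 / 2))⁻¹) :=
        (luxNormGen_const_mul_le hK).trans (mul_le_mul_right hcore _)
    _ = _ := by rw [hKB]; ring

lemma luxNormGen_le_of_enorm_le_setLIntegral_Iic_mul [SFinite κ] (hpq : p.HolderConjugate q)
    (hΦ : IsYoung Φ) (hsub : Submult Φ) (hinv : IsYoungInv Φ Φinv)
    (hΛ : ConvexOn ℝ univ fun t => Φ (|t| ^ (1 / p))) (hG : Measurable G) (hN : Measurable N)
    (hw : Measurable w) (hw0 : ∀ᵐ t ∂σ, w t ≠ 0 ∧ w t ≠ ⊤)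
    (hBσ : ∀ᵐ x ∂σ, (ENNReal.ofReal (massGauge Φinv (κ (Ici x))) ^ 2)⁻¹ *
      dualMeasure σ N w q (Iic x) ^ (1 / q) ≤ B)
    (hBκ : ∀ᵐ x ∂κ, (ENNReal.ofReal (massGauge Φinv (κ (Ici x))) ^ 2)⁻¹ *
      dualMeasure σ N w q (Iic x) ^ (1 / q) ≤ B)
    (hF : ∀ᵐ x ∂κ, ‖F x‖ₑ ≤ ∫⁻ t in Iic x, G t * N t ∂σ) :
    luxNormGen Φ κ F ≤ ENNReal.ofReal (2 * (Φinv (1 / 2))⁻¹) * B *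
      (∫⁻ t, G t ^ p * w t ∂σ) ^ (1 / p) := by
  have hp := hpq.pos
  have hC : ENNReal.ofReal (2 * (Φinv (1 / 2))⁻¹) ≠ 0 :=
    (ENNReal.ofReal_pos.2 (mul_pos two_pos (inv_pos.2 (hinv.apply_half_pos hΦ)))).ne'
  have hzero (h : ∀ᵐ x ∂κ, ‖F x‖ₑ ≤ 0) : luxNormGen Φ κ F = 0 :=
    luxNormGen_eq_zero_of_ae_eq_zero hΦ (h.mono fun x hx => by simpa using hx)
  rcases eq_or_ne (∫⁻ t, G t ^ p * w t ∂σ) 0 with hL0 | hL0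
  · have hG0 : ∀ᵐ t ∂σ, G t * N t = 0 :=
      (ae_eq_zero_of_lintegral_rpow_mul_eq_zero hp hG hw (hw0.mono fun t ht => ht.1) hL0).mono
        fun t ht => by rw [ht, Pi.zero_apply, zero_mul]
    have hint (x : α) : ∫⁻ t in Iic x, G t * N t ∂σ = 0 := by
      rw [lintegral_congr_ae (ae_restrict_of_ae hG0), lintegral_zero]
    exact (hzero (by simpa only [hint] using hF)).trans_le zero_le
  rcases eq_or_ne B ⊤ with rfl | hBtop
  · have hLp0 : (∫⁻ t, G t ^ p * w t ∂σ) ^ (1 / p) ≠ 0 := by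
      rwa [Ne, ENNReal.rpow_eq_zero_iff_of_pos (by positivity)]
    exact le_top.trans_eq (by rw [ENNReal.mul_top hC, ENNReal.top_mul hLp0])
  have hu := (measurable_massGauge_comp hΦ hinv (measurable_measure_Ici κ)).ennreal_ofReal
  have hF' := hF.mp <| hBκ.mono fun x hBx hx => hx.trans <|
    setLIntegral_Iic_mul_le_of_inv_mul_dualMeasure_le hpq hG hN hw hu
      (fun _ => ENNReal.ofReal_ne_top) hw0 hBtop hBσ hBx
  rcases eq_or_ne B 0 with rfl | hB0
  · exact (hzero (by simpa using hF')).trans_le zero_le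
  rcases eq_or_ne (∫⁻ t, G t ^ p * w t ∂σ) ⊤ with hLtop | hLtop
  · exact le_top.trans_eq (by
      rw [hLtop, ENNReal.top_rpow_of_pos (by positivity), ENNReal.mul_top (mul_ne_zero hC hB0)])
  exact luxNormGen_le_of_enorm_le_setLIntegral_Iic_density hp hΦ hsub hinv hΛ (by fun_prop) hL0
    hLtop hB0 hBtop hF'

lemma luxNormGen_le_of_enorm_le_setLIntegral_Ici_mul [SFinite κ] (hpq : p.HolderConjugate q)
    (hΦ : IsYoung Φ) (hsub : Submult Φ) (hinv : IsYoungInv Φ Φinv)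
    (hΛ : ConvexOn ℝ univ fun t => Φ (|t| ^ (1 / p))) (hG : Measurable G) (hN : Measurable N)
    (hw : Measurable w) (hw0 : ∀ᵐ t ∂σ, w t ≠ 0 ∧ w t ≠ ⊤)
    (hBσ : ∀ᵐ x ∂σ, (ENNReal.ofReal (massGauge Φinv (κ (Iic x))) ^ 2)⁻¹ *
      dualMeasure σ N w q (Ici x) ^ (1 / q) ≤ B)
    (hBκ : ∀ᵐ x ∂κ, (ENNReal.ofReal (massGauge Φinv (κ (Iic x))) ^ 2)⁻¹ *
      dualMeasure σ N w q (Ici x) ^ (1 / q) ≤ B)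
    (hF : ∀ᵐ x ∂κ, ‖F x‖ₑ ≤ ∫⁻ t in Ici x, G t * N t ∂σ) :
    luxNormGen Φ κ F ≤ ENNReal.ofReal (2 * (Φinv (1 / 2))⁻¹) * B *
      (∫⁻ t, G t ^ p * w t ∂σ) ^ (1 / p) := by
  have : SFinite (α := αᵒᵈ) κ := ‹SFinite κ›
  exact luxNormGen_le_of_enorm_le_setLIntegral_Iic_mul (α := αᵒᵈ) hpq hΦ hsub hinv hΛ hG hN hw hw0
    hBσ hBκ hF

end Hardy

section MeanRepresentation

variable {a b x y : ℝ} {f : ℝ → ℝ}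

lemma enorm_sub_le_setLIntegral_enorm_deriv (hf : AbsolutelyContinuousOnInterval f a b)
    (hx : x ∈ Icc a b) (hy : y ∈ Icc a b) (hyx : y ≤ x) :
    ‖f x - f y‖ₑ ≤ ∫⁻ t in Icc y x, ‖deriv f t‖ₑ ∂volume.restrict (Ioo a b) := by
  have hsub : uIcc y x ⊆ uIcc a b := uIcc_subset_uIcc (Icc_subset_uIcc hy) (Icc_subset_uIcc hx)
  rw [← (hf.mono hsub).integral_deriv_eq_sub, intervalIntegral.integral_of_le hyx,
    Measure.restrict_congr_set Ioo_ae_eq_Ioc.symm, Measure.restrict_restrict measurableSet_Icc]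
  exact (enorm_integral_le_lintegral_enorm _).trans
    (lintegral_mono_set (subset_inter Ioo_subset_Icc_self (Ioo_subset_Ioo hy.1 hx.2)))

lemma enorm_sub_le_setLIntegral_Ici_add_setLIntegral_Iic
    (hf : AbsolutelyContinuousOnInterval f a b) (hx : x ∈ Icc a b) (hy : y ∈ Icc a b) :
    ‖f x - f y‖ₑ ≤ ∫⁻ t in Ici y, ‖deriv f t‖ₑ ∂(volume.restrict (Ioo a b)).restrict (Iic x) +
      ∫⁻ t in Iic y, ‖deriv f t‖ₑ ∂(volume.restrict (Ioo a b)).restrict (Ici x) := by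
  rw [Measure.restrict_restrict measurableSet_Ici, Measure.restrict_restrict measurableSet_Iic,
    Ici_inter_Iic, inter_comm, Ici_inter_Iic]
  rcases le_total y x with hyx | hxy
  · exact (enorm_sub_le_setLIntegral_enorm_deriv hf hx hy hyx).trans le_self_add
  · rw [← enorm_neg, neg_sub]
    exact (enorm_sub_le_setLIntegral_enorm_deriv hf hy hx hxy).trans le_add_self

lemma enorm_sub_mean_mul_measure_le {α : Type*} [MeasurableSpace α] {ν : Measure α}
    [IsFiniteMeasure ν] {s : Set α} {f : α → ℝ} (hf : IntegrableOn f s ν) (hs : ν s ≠ 0) (c : ℝ) :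
    ‖c - (ν s).toReal⁻¹ * ∫ y in s, f y ∂ν‖ₑ * ν s ≤ ∫⁻ y in s, ‖c - f y‖ₑ ∂ν := by
  have hn : 0 < (ν s).toReal := ENNReal.toReal_pos hs (measure_ne_top ν s)
  have hmean : (c - (ν s).toReal⁻¹ * ∫ y in s, f y ∂ν) * (ν s).toReal =
      ∫ y in s, (c - f y) ∂ν := by
    rw [integral_sub (integrable_const _) hf, setIntegral_const, smul_eq_mul, Measure.real]
    field_simp
  calc _ = ‖∫ y in s, (c - f y) ∂ν‖ₑ := by
        rw [← hmean, enorm_mul, Real.enorm_of_nonneg hn.le,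
          ENNReal.ofReal_toReal (measure_ne_top ν s)]
    _ ≤ _ := enorm_integral_le_lintegral_enorm _

/- Integrating `f x - f y = ∫ f'` over `y` with respect to `ν` and exchanging the integrals gives
each `f' t` the mass of `ν` on the far side of `t` from `x`. -/
lemma enorm_sub_mean_mul_measure_le_setLIntegral_add (hf : AbsolutelyContinuousOnInterval f a b)
    {ν : Measure ℝ} [IsFiniteMeasure ν] (hν : ν (Icc a b) ≠ 0) (hx : x ∈ Icc a b) :
    ‖f x - (ν (Icc a b)).toReal⁻¹ * ∫ y in Icc a b, f y ∂ν‖ₑ * ν (Icc a b) ≤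
      ∫⁻ t in Iic x, ‖deriv f t‖ₑ * ν.restrict (Icc a b) (Iic t) ∂volume.restrict (Ioo a b) +
      ∫⁻ t in Ici x, ‖deriv f t‖ₑ * ν.restrict (Icc a b) (Ici t) ∂volume.restrict (Ioo a b) := by
  have hcont : ContinuousOn f (Icc a b) := hf.continuousOn.mono Icc_subset_uIcc
  have hG : Measurable fun t => ‖deriv f t‖ₑ := (measurable_deriv f).enorm
  set σ := (volume : Measure ℝ).restrict (Ioo a b)
  have hmeas : Measurable fun y => ∫⁻ t in Iic y, ‖deriv f t‖ₑ ∂σ.restrict (Ici x) :=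
    Monotone.measurable fun _ _ h => lintegral_mono_set (Iic_subset_Iic.2 h)
  calc _ ≤ ∫⁻ y in Icc a b, ‖f x - f y‖ₑ ∂ν :=
        enorm_sub_mean_mul_measure_le hcont.integrableOn_Icc hν (f x)
    _ ≤ ∫⁻ y in Icc a b, (∫⁻ t in Ici y, ‖deriv f t‖ₑ ∂σ.restrict (Iic x) +
          ∫⁻ t in Iic y, ‖deriv f t‖ₑ ∂σ.restrict (Ici x)) ∂ν :=
        setLIntegral_mono' measurableSet_Icc fun y hy =>
          enorm_sub_le_setLIntegral_Ici_add_setLIntegral_Iic hf hx hy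
    _ = _ := by
        rw [lintegral_add_right _ hmeas,
          lintegral_setLIntegral_Iic_eq (F := fun _ t => ‖deriv f t‖ₑ) (hG.comp measurable_snd),
          ← lintegral_setLIntegral_Iic_eq (F := fun t _ => ‖deriv f t‖ₑ) (hG.comp measurable_fst)]
        simp only [setLIntegral_const]

lemma setLIntegral_enorm_deriv_mul_ne_top (hf : AbsolutelyContinuousOnInterval f a b)
    {N : ℝ → ℝ≥0∞} {C : ℝ≥0∞} (hC : C ≠ ⊤) (hN : ∀ t, N t ≤ C) {s : Set ℝ} :
    ∫⁻ t in s, ‖deriv f t‖ₑ * N t ∂volume.restrict (Ioo a b) ≠ ⊤ := by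
  have hderiv : ∫⁻ t in Ioo a b, ‖deriv f t‖ₑ ≠ ⊤ :=
    ne_top_of_le_ne_top hf.intervalIntegrable_deriv.1.2.ne
      (lintegral_mono_set Ioo_subset_Ioc_self)
  refine ne_top_of_le_ne_top (ENNReal.mul_ne_top hderiv hC) ?_
  calc _ ≤ ∫⁻ t in Ioo a b, ‖deriv f t‖ₑ * N t := setLIntegral_le_lintegral s _
    _ ≤ ∫⁻ t in Ioo a b, ‖deriv f t‖ₑ * C := by gcongr with t; exact hN t
    _ = _ := lintegral_mul_const _ (measurable_deriv f).enorm

end MeanRepresentation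

section OneSidedConstants

variable {Φinv w : ℝ → ℝ} {μ ν : Measure ℝ} {q a b x : ℝ}

/-- The first supremum in `K_{p,Φ}`, with `q` in the role of `p'`. The weight `μ` is replaced by a
Borel measure, for which `[x, b)` is the part of `(a, b)` to the right of `x`. -/
def leftMuckenhouptConst (Φinv : ℝ → ℝ) (μ ν : Measure ℝ) (w : ℝ → ℝ) (q a b : ℝ) : ℝ≥0∞ :=
  ⨆ x ∈ Ioo a b, (ENNReal.ofReal (massGauge Φinv (μ (Ico x b))) ^ 2)⁻¹ *
    (∫⁻ t in Icc a x, ENNReal.ofReal ((ν (Icc a t)).toReal ^ q * w t ^ (1 - q))) ^ (1 / q)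

/-- The second supremum in `K_{p,Φ}`, the mirror image of `leftMuckenhouptConst`. -/
def rightMuckenhouptConst (Φinv : ℝ → ℝ) (μ ν : Measure ℝ) (w : ℝ → ℝ) (q a b : ℝ) : ℝ≥0∞ :=
  ⨆ x ∈ Ioo a b, (ENNReal.ofReal (massGauge Φinv (μ (Ioc a x))) ^ 2)⁻¹ *
    (∫⁻ t in Icc x b, ENNReal.ofReal ((ν (Icc t b)).toReal ^ q * w t ^ (1 - q))) ^ (1 / q)

lemma Iic_inter_Ioo_eq (hx : x < b) : Iic x ∩ Ioo a b = Ioc a x := by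
  grind

lemma Ici_inter_Ioo_eq (hx : a < x) : Ici x ∩ Ioo a b = Ico x b := by
  grind

lemma ofReal_toReal_rpow_mul_rpow {m : ℝ≥0∞} {s : ℝ} (hm : m ≠ ⊤) (hs : 0 < s) (hq : 0 < q) :
    ENNReal.ofReal (m.toReal ^ q * s ^ (1 - q)) = m ^ q * ENNReal.ofReal s ^ (1 - q) := by
  rw [ENNReal.ofReal_mul (by positivity), ENNReal.toReal_rpow,
    ENNReal.ofReal_toReal (ENNReal.rpow_ne_top_of_nonneg hq.le hm), ENNReal.ofReal_rpow_of_pos hs]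

lemma dualMeasure_Iic_eq [IsFiniteMeasure ν] (hq : 0 < q) (hw : IsWeight w a b)
    (hx : x ∈ Ioo a b) :
    dualMeasure (volume.restrict (Ioo a b)) (fun t => ν.restrict (Icc a b) (Iic t))
        (fun t => ENNReal.ofReal (w t)) q (Iic x) =
      ∫⁻ t in Icc a x, ENNReal.ofReal ((ν (Icc a t)).toReal ^ q * w t ^ (1 - q)) := by
  have hsub : Icc a x ⊆ Icc a b := Icc_subset_Icc_right hx.2.le
  rw [dualMeasure, withDensity_apply _ measurableSet_Iic,
    Measure.restrict_restrict measurableSet_Iic, Iic_inter_Ioo_eq hx.2,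
    Measure.restrict_congr_set Ioc_ae_eq_Icc]
  refine lintegral_congr_ae ?_
  filter_upwards [ae_restrict_mem measurableSet_Icc,
    ae_restrict_of_ae_restrict_of_subset hsub hw.2.2] with t ht hwt
  have hset : Iic t ∩ Icc a b = Icc a t := by
    have := (hsub ht).2
    grind
  rw [Measure.restrict_apply measurableSet_Iic, hset,
    ofReal_toReal_rpow_mul_rpow (measure_ne_top _ _) hwt hq]

lemma dualMeasure_Ici_eq [IsFiniteMeasure ν] (hq : 0 < q) (hw : IsWeight w a b)
    (hx : x ∈ Ioo a b) :
    dualMeasure (volume.restrict (Ioo a b)) (fun t => ν.restrict (Icc a b) (Ici t))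
        (fun t => ENNReal.ofReal (w t)) q (Ici x) =
      ∫⁻ t in Icc x b, ENNReal.ofReal ((ν (Icc t b)).toReal ^ q * w t ^ (1 - q)) := by
  have hsub : Icc x b ⊆ Icc a b := Icc_subset_Icc_left hx.1.le
  rw [dualMeasure, withDensity_apply _ measurableSet_Ici,
    Measure.restrict_restrict measurableSet_Ici, Ici_inter_Ioo_eq hx.1,
    Measure.restrict_congr_set Ico_ae_eq_Icc]
  refine lintegral_congr_ae ?_
  filter_upwards [ae_restrict_mem measurableSet_Icc,
    ae_restrict_of_ae_restrict_of_subset hsub hw.2.2] with t ht hwt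
  have hset : Ici t ∩ Icc a b = Icc t b := by
    have := (hsub ht).1
    grind
  rw [Measure.restrict_apply measurableSet_Ici, hset,
    ofReal_toReal_rpow_mul_rpow (measure_ne_top _ _) hwt hq]

lemma inv_massGauge_mul_dualMeasure_le_leftMuckenhouptConst [IsFiniteMeasure ν] (hq : 0 < q)
    (hw : IsWeight w a b) (hx : x ∈ Ioo a b) :
    (ENNReal.ofReal (massGauge Φinv (μ.restrict (Ioo a b) (Ici x))) ^ 2)⁻¹ *
      dualMeasure (volume.restrict (Ioo a b)) (fun t => ν.restrict (Icc a b) (Iic t))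
        (fun t => ENNReal.ofReal (w t)) q (Iic x) ^ (1 / q) ≤
      leftMuckenhouptConst Φinv μ ν w q a b := by
  rw [dualMeasure_Iic_eq hq hw hx, Measure.restrict_apply measurableSet_Ici,
    Ici_inter_Ioo_eq hx.1]
  exact le_iSup₂_of_le x hx le_rfl

lemma inv_massGauge_mul_dualMeasure_le_rightMuckenhouptConst [IsFiniteMeasure ν] (hq : 0 < q)
    (hw : IsWeight w a b) (hx : x ∈ Ioo a b) :
    (ENNReal.ofReal (massGauge Φinv (μ.restrict (Ioo a b) (Iic x))) ^ 2)⁻¹ *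
      dualMeasure (volume.restrict (Ioo a b)) (fun t => ν.restrict (Icc a b) (Ici t))
        (fun t => ENNReal.ofReal (w t)) q (Ici x) ^ (1 / q) ≤
      rightMuckenhouptConst Φinv μ ν w q a b := by
  rw [dualMeasure_Ici_eq hq hw hx, Measure.restrict_apply measurableSet_Iic,
    Iic_inter_Ioo_eq hx.2]
  exact le_iSup₂_of_le x hx le_rfl

end OneSidedConstants

section Poincare

variable {a b p q : ℝ} {Φ Φinv w f f' : ℝ → ℝ} {μ ν : Measure ℝ}

lemma lpNorm_eq_lintegral_enorm_deriv (hp : 0 ≤ p)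
    (hf' : ∀ᵐ x ∂volume.restrict (Ioo a b), HasDerivAt f (f' x) x) :
    lpNorm w p a b f' =
      (∫⁻ t, ‖deriv f t‖ₑ ^ p * ENNReal.ofReal (w t) ∂volume.restrict (Ioo a b)) ^ (1 / p) := by
  rw [_root_.lpNorm, Measure.restrict_congr_set Ioo_ae_eq_Icc.symm]
  congr 1
  refine lintegral_congr_ae ?_
  filter_upwards [hf'] with t ht
  rw [ht.deriv, ENNReal.ofReal_mul (by positivity),
    ← ENNReal.ofReal_rpow_of_nonneg (abs_nonneg _) hp, Real.enorm_eq_ofReal_abs]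

lemma IsWeight.ae_ofReal_ne_zero_and_ne_top (hw : IsWeight w a b) :
    ∀ᵐ t ∂volume.restrict (Ioo a b), ENNReal.ofReal (w t) ≠ 0 ∧ ENNReal.ofReal (w t) ≠ ⊤ :=
  (ae_restrict_of_ae_restrict_of_subset Ioo_subset_Icc_self hw.2.2).mono fun _ ht =>
    ⟨(ENNReal.ofReal_pos.2 ht).ne', ENNReal.ofReal_ne_top⟩

lemma luxNormGen_le_of_enorm_mul_le_add {Ω : Type*} [MeasurableSpace Ω] {κ : Measure Ω}
    {F : Ω → ℝ} {A₁ A₂ : Ω → ℝ≥0∞} {n : ℝ≥0∞} (hΦ : IsYoung Φ) (hA₁ : Measurable A₁)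
    (htop₁ : ∀ x, A₁ x ≠ ⊤) (htop₂ : ∀ x, A₂ x ≠ ⊤) (hn0 : n ≠ 0) (hntop : n ≠ ⊤)
    (hF : ∀ᵐ x ∂κ, ‖F x‖ₑ * n ≤ A₁ x + A₂ x) :
    luxNormGen Φ κ F ≤ n⁻¹ *
      (luxNormGen Φ κ (fun x => (A₁ x).toReal) + luxNormGen Φ κ (fun x => (A₂ x).toReal)) := by
  have hn : 0 < n.toReal := ENNReal.toReal_pos hn0 hntop
  calc luxNormGen Φ κ F
      ≤ luxNormGen Φ κ fun x => n.toReal⁻¹ * ((A₁ x).toReal + (A₂ x).toReal) := by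
        refine luxNormGen_mono hΦ ?_
        filter_upwards [hF] with x hx
        have hle := ENNReal.toReal_mono (ENNReal.add_ne_top.2 ⟨htop₁ x, htop₂ x⟩) hx
        rw [ENNReal.toReal_mul, toReal_enorm, Real.norm_eq_abs,
          ENNReal.toReal_add (htop₁ x) (htop₂ x), ← le_div_iff₀ hn, div_eq_inv_mul] at hle
        exact hle.trans (le_abs_self _)
    _ ≤ ENNReal.ofReal n.toReal⁻¹ * luxNormGen Φ κ fun x => (A₁ x).toReal + (A₂ x).toReal :=
        luxNormGen_const_mul_le (inv_pos.2 hn)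
    _ ≤ _ := by
        rw [ENNReal.ofReal_inv_of_pos hn, ENNReal.ofReal_toReal hntop]
        gcongr
        exact luxNormGen_add_le hΦ hA₁.ennreal_toReal

lemma luxNormGen_setLIntegral_Iic_mul_le_leftMuckenhouptConst (hpq : p.HolderConjugate q)
    (hΦ : IsYoung Φ) (hsub : Submult Φ) (hinv : IsYoungInv Φ Φinv)
    (hΛ : ConvexOn ℝ univ fun t => Φ (|t| ^ (1 / p))) [SFinite μ] (hw : IsWeight w a b)
    [IsFiniteMeasure ν] {G : ℝ → ℝ≥0∞} (hG : Measurable G) :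
    luxNormGen Φ (μ.restrict (Ioo a b)) (fun x =>
        (∫⁻ t in Iic x, G t * ν.restrict (Icc a b) (Iic t) ∂volume.restrict (Ioo a b)).toReal) ≤
      ENNReal.ofReal (2 * (Φinv (1 / 2))⁻¹) * leftMuckenhouptConst Φinv μ ν w q a b *
        (∫⁻ t, G t ^ p * ENNReal.ofReal (w t) ∂volume.restrict (Ioo a b)) ^ (1 / p) := by
  have hB {κ : Measure ℝ} := (ae_restrict_mem (μ := κ) measurableSet_Ioo).mono fun x hx =>
    inv_massGauge_mul_dualMeasure_le_leftMuckenhouptConst (Φinv := Φinv) (μ := μ) (ν := ν)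
      hpq.symm.pos hw hx
  exact luxNormGen_le_of_enorm_le_setLIntegral_Iic_mul hpq hΦ hsub hinv hΛ hG
    (measurable_measure_Iic _) hw.1.ennreal_ofReal hw.ae_ofReal_ne_zero_and_ne_top hB hB
    (ae_of_all _ fun _ =>
      (Real.enorm_of_nonneg ENNReal.toReal_nonneg).trans_le ENNReal.ofReal_toReal_le)

lemma luxNormGen_setLIntegral_Ici_mul_le_rightMuckenhouptConst (hpq : p.HolderConjugate q)
    (hΦ : IsYoung Φ) (hsub : Submult Φ) (hinv : IsYoungInv Φ Φinv)
    (hΛ : ConvexOn ℝ univ fun t => Φ (|t| ^ (1 / p))) [SFinite μ] (hw : IsWeight w a b)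
    [IsFiniteMeasure ν] {G : ℝ → ℝ≥0∞} (hG : Measurable G) :
    luxNormGen Φ (μ.restrict (Ioo a b)) (fun x =>
        (∫⁻ t in Ici x, G t * ν.restrict (Icc a b) (Ici t) ∂volume.restrict (Ioo a b)).toReal) ≤
      ENNReal.ofReal (2 * (Φinv (1 / 2))⁻¹) * rightMuckenhouptConst Φinv μ ν w q a b *
        (∫⁻ t, G t ^ p * ENNReal.ofReal (w t) ∂volume.restrict (Ioo a b)) ^ (1 / p) := by
  have hB {κ : Measure ℝ} := (ae_restrict_mem (μ := κ) measurableSet_Ioo).mono fun x hx =>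
    inv_massGauge_mul_dualMeasure_le_rightMuckenhouptConst (Φinv := Φinv) (μ := μ) (ν := ν)
      hpq.symm.pos hw hx
  exact luxNormGen_le_of_enorm_le_setLIntegral_Ici_mul hpq hΦ hsub hinv hΛ hG
    (measurable_measure_Ici _) hw.1.ennreal_ofReal hw.ae_ofReal_ne_zero_and_ne_top hB hB
    (ae_of_all _ fun _ =>
      (Real.enorm_of_nonneg ENNReal.toReal_nonneg).trans_le ENNReal.ofReal_toReal_le)

theorem orlicz_poincare_p_gt_one_sufficient_general (hpq : p.HolderConjugate q) (hΦ : IsYoung Φ)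
    (hsub : Submult Φ) (hinv : IsYoungInv Φ Φinv)
    (hΛ : ConvexOn ℝ univ fun t => Φ (|t| ^ (1 / p))) [SFinite μ] (hw : IsWeight w a b)
    [IsFiniteMeasure ν] (hν : 0 < ν (Icc a b)) (hf : AbsolutelyContinuousOnInterval f a b)
    (hf' : ∀ᵐ x ∂volume.restrict (Ioo a b), HasDerivAt f (f' x) x) :
    luxNormGen Φ (μ.restrict (Ioo a b))
        (fun x => f x - (ν (Icc a b)).toReal⁻¹ * ∫ y in Icc a b, f y ∂ν) ≤
      ENNReal.ofReal (2 * (Φinv (1 / 2))⁻¹) *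
        ((ν (Icc a b))⁻¹ * (leftMuckenhouptConst Φinv μ ν w q a b +
          rightMuckenhouptConst Φinv μ ν w q a b)) *
        lpNorm w p a b f' := by
  have hG : Measurable fun t => ‖deriv f t‖ₑ := (measurable_deriv f).enorm
  set left : ℝ → ℝ≥0∞ := fun x =>
    ∫⁻ t in Iic x, ‖deriv f t‖ₑ * ν.restrict (Icc a b) (Iic t) ∂volume.restrict (Ioo a b)
  set right : ℝ → ℝ≥0∞ := fun x =>
    ∫⁻ t in Ici x, ‖deriv f t‖ₑ * ν.restrict (Icc a b) (Ici t) ∂volume.restrict (Ioo a b)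
  have hleft : Monotone left := fun _ _ h => lintegral_mono_set (Iic_subset_Iic.2 h)
  have hleft_ne_top (x : ℝ) : left x ≠ ⊤ :=
    setLIntegral_enorm_deriv_mul_ne_top hf (measure_ne_top _ _) fun t =>
      measure_mono (subset_univ _)
  have hright_ne_top (x : ℝ) : right x ≠ ⊤ :=
    setLIntegral_enorm_deriv_mul_ne_top hf (measure_ne_top _ _) fun t =>
      measure_mono (subset_univ _)
  have hbound := (ae_restrict_mem (μ := μ) measurableSet_Ioo).mono fun x hx =>
    enorm_sub_mean_mul_measure_le_setLIntegral_add hf hν.ne' (Ioo_subset_Icc_self hx)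
  calc _ ≤ (ν (Icc a b))⁻¹ * (luxNormGen Φ (μ.restrict (Ioo a b)) (fun x => (left x).toReal) +
          luxNormGen Φ (μ.restrict (Ioo a b)) fun x => (right x).toReal) :=
        luxNormGen_le_of_enorm_mul_le_add hΦ hleft.measurable hleft_ne_top hright_ne_top hν.ne'
          (measure_ne_top _ _) hbound
    _ ≤ _ := mul_le_mul_right (add_le_add
        (luxNormGen_setLIntegral_Iic_mul_le_leftMuckenhouptConst hpq hΦ hsub hinv hΛ hw hG)
        (luxNormGen_setLIntegral_Ici_mul_le_rightMuckenhouptConst hpq hΦ hsub hinv hΛ hw hG)) _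
    _ = _ := by
        rw [lpNorm_eq_lintegral_enorm_deriv hpq.nonneg hf']
        ring

end Poincare

section Weights

variable {a b x y : ℝ} {Φ μ : ℝ → ℝ}

lemma luxNorm_eq_luxNormGen (hΦ : IsYoung Φ) (hμ : Measurable μ) (f : ℝ → ℝ) :
    luxNorm Φ μ a b f = luxNormGen Φ
      ((volume.withDensity fun t => ENNReal.ofReal (μ t)).restrict (Ioo a b)) f := by
  have hmod (c : ℝ) : ∫⁻ x in Icc a b, ENNReal.ofReal (Φ (f x / c) * μ x) =
      ∫⁻ x, ENNReal.ofReal (Φ (f x / c))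
        ∂(volume.withDensity fun t => ENNReal.ofReal (μ t)).restrict (Ioo a b) := by
    rw [restrict_withDensity measurableSet_Ioo,
      lintegral_withDensity_eq_lintegral_mul_non_measurable _ hμ.ennreal_ofReal
        (ae_of_all _ fun _ => ENNReal.ofReal_lt_top),
      Measure.restrict_congr_set Ioo_ae_eq_Icc]
    simp only [Pi.mul_apply, ENNReal.ofReal_mul (hΦ.2.2.2.1 _), mul_comm (ENNReal.ofReal (μ _))]
  simp only [luxNorm, luxNormGen, hmod]

lemma withDensity_Ico_eq_wInt :
    volume.withDensity (fun t => ENNReal.ofReal (μ t)) (Ico x y) = wInt μ x y := by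
  rw [withDensity_apply _ measurableSet_Ico, Measure.restrict_congr_set Ico_ae_eq_Icc, wInt]

lemma withDensity_Ioc_eq_wInt :
    volume.withDensity (fun t => ENNReal.ofReal (μ t)) (Ioc x y) = wInt μ x y := by
  rw [withDensity_apply _ measurableSet_Ioc, Measure.restrict_congr_set Ioc_ae_eq_Icc, wInt]

end Weights

/-- Sufficiency of `K_{p,Φ}(μ,ν,w) < ∞` for the `(Φ,p)` Orlicz–Poincaré inequality, `p > 1`. -/
theorem orlicz_poincare_p_gt_one_sufficient
    (a b : ℝ) (hab : a < b) (p pc : ℝ) (hp : 1 < p) (hpc : pc = p / (p - 1))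
    (Φ Φinv μ w : ℝ → ℝ)
    (hΦ : IsYoung Φ) (hsub : Submult Φ) (hinv : IsYoungInv Φ Φinv)
    (hΛ : ConvexOn ℝ Set.univ (fun t => Φ (|t| ^ (1 / p))))
    (hμ : IsWeight μ a b) (hw : IsWeight w a b)
    (ν : Measure ℝ) [IsFiniteMeasure ν] (hν : 0 < ν (Set.Icc a b))
    (K : ℝ≥0∞)
    (hK : K = (ν (Set.Icc a b))⁻¹ *
      ((⨆ x ∈ Set.Ioo a b,
          ((ENNReal.ofReal (Φinv ((wInt μ x b).toReal ^ (-(1/2) : ℝ)))) ^ 2)⁻¹ *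
            (∫⁻ t in Set.Icc a x,
              ENNReal.ofReal ((ν (Set.Icc a t)).toReal ^ pc * w t ^ (1 - pc))) ^ (1 / pc)) +
        (⨆ x ∈ Set.Ioo a b,
          ((ENNReal.ofReal (Φinv ((wInt μ a x).toReal ^ (-(1/2) : ℝ)))) ^ 2)⁻¹ *
            (∫⁻ t in Set.Icc x b,
              ENNReal.ofReal ((ν (Set.Icc t b)).toReal ^ pc * w t ^ (1 - pc))) ^ (1 / pc))))
    (hKfin : K < ⊤) :
    ∀ f f' : ℝ → ℝ, LipschitzWithDeriv f f' a b →
      luxNorm Φ μ a b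
        (fun x => f x - (ν (Set.Icc a b)).toReal⁻¹ * ∫ y in Set.Icc a b, f y ∂ν)
        ≤ ENNReal.ofReal (2 * (Φinv (1/2))⁻¹) * K * lpNorm w p a b f' := by
  rintro f f' ⟨⟨C, hf⟩, hf'⟩
  have hpq : p.HolderConjugate pc := hpc ▸ Real.HolderConjugate.conjExponent hp
  have hfac : AbsolutelyContinuousOnInterval f a b :=
    (hf.mono (uIcc_of_le hab.le).subset).absolutelyContinuousOnInterval
  have h := orlicz_poincare_p_gt_one_sufficient_general
    (μ := volume.withDensity fun t => ENNReal.ofReal (μ t)) hpq hΦ hsub hinv hΛ hw hν hfac hf'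
  simpa only [leftMuckenhouptConst, rightMuckenhouptConst, massGauge, withDensity_Ico_eq_wInt,
    withDensity_Ioc_eq_wInt, ← luxNorm_eq_luxNormGen hΦ hμ.1, ← hK] using h
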